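/- Let (P, V, c, L) be a budgeting scenario with n voters, let ℓ ∈ {1,...,L}, let V' ⊆ V with |V'| ≥ ℓn/L, and let P' ⊆ P. Suppose every voter in V' assigns value 0 to every project outside P'. Let S ⊆ P \ P' be any set of projects such that for each p ∈ S, the sum of support Σ_{j=1}^n v_j(p) is strictly greater than (n/L) · c(p). Then c(S) ≤ L − ℓ. -/

import Mathlib

open Finset

/-- A participatory-budgeting scenario: a finite set `P` of projects (of type `α`),
voters indexed by `ι`, each voter `j` with a cumulative ballot `ballot j` that is
nonnegative, vanishes outside `P`, and sums to `1` over `P`; each project has a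
positive natural-number cost, and `L` is the budget limit. -/
structure Scenario (α ι : Type*) where
  P : Finset α
  ballot : ι → α → ℝ
  cost : α → ℕ
  L : ℕ
  ballot_nonneg : ∀ j p, 0 ≤ ballot j p
  ballot_outside : ∀ j, ∀ p ∉ P, ballot j p = 0
  ballot_sum : ∀ j, ∑ p ∈ P, ballot j p = 1
  cost_pos : ∀ p ∈ P, 0 < cost p

/-- Counting bound used in the proof that Greedy-by-Support-over-Cost satisfies
Weak-PR: let `ℓ ∈ {1,…,L}`, let `V'` be a group of at least `ℓn/L` voters each
of whom assigns value `0` to every project outside `P'`, and let `S ⊆ P \ P'`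
be a set of projects each of whose total support `∑_j v_j(p)` strictly exceeds
`(n/L)·c(p)`. Then `c(S) ≤ L − ℓ`. -/
theorem cost_of_high_ratio_outside_le {α ι : Type*} [DecidableEq α] [Fintype ι]
    (E : Scenario α ι) (ℓ : ℕ) (hℓ1 : 1 ≤ ℓ) (hℓL : ℓ ≤ E.L)
    (V' : Finset ι)
    (hV' : (ℓ : ℝ) * (Fintype.card ι : ℝ) / (E.L : ℝ) ≤ (V'.card : ℝ))
    (P' : Finset α)
    (hzero : ∀ j ∈ V', ∀ p ∉ P', E.ballot j p = 0)
    (S : Finset α) (hS : S ⊆ E.P \ P')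
    (hsup : ∀ p ∈ S,
      (Fintype.card ι : ℝ) / (E.L : ℝ) * (E.cost p : ℝ) < ∑ j : ι, E.ballot j p) :
    ((∑ p ∈ S, E.cost p : ℕ) : ℝ) ≤ (E.L : ℝ) - (ℓ : ℝ) := by
  classical
  have hLpos : (0 : ℝ) < E.L := by
    exact_mod_cast lt_of_lt_of_le (Nat.lt_of_lt_of_le Nat.zero_lt_one hℓ1) hℓL
  have hℓL' : (ℓ : ℝ) ≤ E.L := by exact_mod_cast hℓL
  rcases isEmpty_or_nonempty ι with hι | hι
  · have hSe : S = ∅ := by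
      refine Finset.eq_empty_of_forall_notMem fun p hp => ?_
      have := hsup p hp
      simp at this
    subst hSe
    simpa using hℓL'
  · have hn : (0 : ℝ) < Fintype.card ι := by exact_mod_cast Fintype.card_pos
    have h1 : (Fintype.card ι : ℝ) / E.L * ∑ p ∈ S, (E.cost p : ℝ)
        ≤ ∑ j : ι, ∑ p ∈ S, E.ballot j p := by
      rw [Finset.sum_comm, Finset.mul_sum]
      exact Finset.sum_le_sum fun p hp => (hsup p hp).le
    have h2 : ∑ j : ι, ∑ p ∈ S, E.ballot j p ≤ ∑ j : ι, if j ∈ V' then (0 : ℝ) else 1 := by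
      refine Finset.sum_le_sum fun j _ => ?_
      split_ifs with hj
      · exact (Finset.sum_eq_zero fun p hp =>
          hzero j hj p (Finset.mem_sdiff.1 (hS hp)).2).le
      · rw [← E.ballot_sum j]
        exact Finset.sum_le_sum_of_subset_of_nonneg
          (fun p hp => (Finset.mem_sdiff.1 (hS hp)).1) fun p _ _ => E.ballot_nonneg j p
    have h3 : (∑ j : ι, if j ∈ V' then (0 : ℝ) else 1) = Fintype.card ι - V'.card := by
      have : ∀ j : ι, (if j ∈ V' then (0 : ℝ) else 1) = 1 - if j ∈ V' then (1 : ℝ) else 0 := by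
        intro j
        split_ifs <;> simp
      simp_rw [this, Finset.sum_sub_distrib]
      simp
    push_cast
    have h4 : (Fintype.card ι : ℝ) / E.L * ∑ p ∈ S, (E.cost p : ℝ)
        ≤ (Fintype.card ι : ℝ) / E.L * (E.L - ℓ) := by
      have h5 : (Fintype.card ι : ℝ) / E.L * (E.L - ℓ)
          = Fintype.card ι - ℓ * Fintype.card ι / E.L := by
        field_simp
      rw [h5]
      linarith
    exact le_of_mul_le_mul_left h4 (div_pos hn hLpos)
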